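/- If K is an algebraically closed field, π is a ring automorphism of K with π ≠ id and π ∘ π = id, and i ∈ K satisfies i² = -1, then π(i) = -i and -i ≠ i. -/

import Mathlib

/-!
Let `F` be the fixed field of the involution `π`; the degree of `K` over `F` is two. In
characteristic two, `K = F(x)` with `π x = x + 1`, and the Artin–Schreier equation
`y² + y = (x² + x) x` has no solution in `K`: the trace `y + π y` of a solution would be `x` or
`x + 1`, neither of which lies in `F`. Away from characteristic two, `d = a - π a` satisfies
`π d = -d`, so a square root `b` of `d` satisfies `π b = ± i b`; if `i` were fixed by `π`, this
would give `π (π b) = -b`. Hence `π` moves `i`, necessarily to `-i`.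
-/

/-- A field without separable quadratic extensions: each monic quadratic polynomial with nonzero
discriminant has a root. Inseparable quadratics are left out so that the notion includes all
separably closed fields, whether or not they are perfect. -/
def IsQuadraticallySepClosed (K : Type*) [Field K] : Prop :=
  ∀ b c : K, discrim 1 b c ≠ 0 → ∃ x, x ^ 2 + b * x + c = 0

namespace IsQuadraticallySepClosed

variable {K : Type*} [Field K]

theorem of_isAlgClosed [IsAlgClosed K] : IsQuadraticallySepClosed K := by
  intro b c _
  have hdeg : (Polynomial.C 1 * Polynomial.X ^ 2 + Polynomial.C b * Polynomial.X +
      Polynomial.C c).degree = 2 := Polynomial.degree_quadratic one_ne_zero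
  obtain ⟨x, hx⟩ := IsAlgClosed.exists_root _ (hdeg.trans_ne two_ne_zero)
  exact ⟨x, by simpa using hx⟩

theorem exists_sq_eq (hK : IsQuadraticallySepClosed K) (h2 : (2 : K) ≠ 0) (d : K) :
    ∃ b, b ^ 2 = d := by
  rcases eq_or_ne d 0 with rfl | hd
  · exact ⟨0, zero_pow two_ne_zero⟩
  have hdisc : discrim 1 0 (-d) ≠ 0 := by
    have : discrim 1 0 (-d) = 2 ^ 2 * d := by rw [discrim]; ring
    rw [this]
    exact mul_ne_zero (pow_ne_zero 2 h2) hd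
  obtain ⟨b, hb⟩ := hK 0 (-d) hdisc
  exact ⟨b, by linear_combination hb⟩

theorem exists_sq_add_self_eq [CharP K 2] (hK : IsQuadraticallySepClosed K) (c : K) :
    ∃ y, y ^ 2 + y = c := by
  have hdisc : discrim 1 1 (-c) ≠ 0 := by
    have : discrim 1 1 (-c) = 1 := by
      rw [discrim]
      linear_combination 2 * c * CharTwo.two_eq_zero (R := K)
    rw [this]
    exact one_ne_zero
  obtain ⟨y, hy⟩ := hK 1 (-c) hdisc
  exact ⟨y, by linear_combination hy⟩

end IsQuadraticallySepClosed

section CharacteristicTwo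

theorem sq_add_self_eq_sq_add_self_iff {R : Type*} [CommRing R] [NoZeroDivisors R] [CharP R 2]
    {s t : R} : s ^ 2 + s = t ^ 2 + t ↔ s = t ∨ s = t + 1 := by
  have hfactor : s ^ 2 + s - (t ^ 2 + t) = (s - t) * (s - (t + 1)) := by
    linear_combination (s - t ^ 2 - t + s * t) * CharTwo.two_eq_zero (R := R)
  rw [← sub_eq_zero, hfactor, mul_eq_zero, sub_eq_zero, sub_eq_zero]

theorem exists_map_eq_add_one_of_involutive {K : Type*} [Field K] [CharP K 2] {π : K →+* K}
    (hπ : Function.Involutive π) {a : K} (ha : π a ≠ a) : ∃ x, π x = x + 1 := by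
  have htrace : a + π a ≠ 0 := fun h => ha (CharTwo.add_eq_zero.mp h).symm
  refine ⟨a / (a + π a), ?_⟩
  calc
    π (a / (a + π a)) = π a / (a + π a) := by rw [map_div₀, map_add, hπ a, add_comm (π a)]
    _ = a / (a + π a) + 1 := by
      field_simp
      linear_combination -a * CharTwo.two_eq_zero (R := K)

/-- `y ^ 2 + y = (x ^ 2 + x) * x` is unsolvable because applying `π` to it adds the `π`-invariant
`x ^ 2 + x` to the right-hand side, which determines the trace `y + π y` up to adding `1`. -/
theorem sq_add_self_ne_of_map_eq_add_one {R : Type*} [CommRing R] [IsDomain R] [CharP R 2]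
    {π : R →+* R} (hπ : Function.Involutive π) {x : R} (hx : π x = x + 1) (y : R) :
    y ^ 2 + y ≠ (x ^ 2 + x) * x := by
  intro hy
  have hπy : π y ^ 2 + π y = ((x + 1) ^ 2 + (x + 1)) * (x + 1) := by
    simpa only [map_add, map_mul, map_pow, hx] using congrArg π hy
  have htrace_eq : (y + π y) ^ 2 + (y + π y) = x ^ 2 + x := by
    linear_combination hy + hπy + (y * π y + x ^ 3 + 2 * x ^ 2 + 2 * x + 1) *
      CharTwo.two_eq_zero (R := R)
  have htrace_fixed : π (y + π y) = y + π y := by rw [map_add, hπ y, add_comm]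
  rcases sq_add_self_eq_sq_add_self_iff.mp htrace_eq with h | h <;>
    simp [h, hx] at htrace_fixed

end CharacteristicTwo

theorem IsQuadraticallySepClosed.two_ne_zero_of_involutive {K : Type*} [Field K]
    (hK : IsQuadraticallySepClosed K) {π : K →+* K} (hπ : Function.Involutive π) {a : K}
    (ha : π a ≠ a) : (2 : K) ≠ 0 := by
  intro h2
  have : CharP K 2 := CharTwo.of_one_ne_zero_of_two_eq_zero one_ne_zero h2
  obtain ⟨x, hx⟩ := exists_map_eq_add_one_of_involutive hπ ha
  obtain ⟨y, hy⟩ := hK.exists_sq_add_self_eq ((x ^ 2 + x) * x)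
  exact sq_add_self_ne_of_map_eq_add_one hπ hx y hy

section TwoNeZero

variable {R : Type*} [CommRing R] [NoZeroDivisors R] {π : R →+* R}

theorem eq_zero_of_map_eq_mul_of_sq_eq_neg_one (h2 : (2 : R) ≠ 0) (hπ : Function.Involutive π)
    {e b : R} (he : e ^ 2 = -1) (hπe : π e = e) (hb : π b = e * b) : b = 0 := by
  have hneg : b = -b := by
    calc
      b = π (π b) := (hπ b).symm
      _ = e ^ 2 * b := by rw [hb, map_mul, hπe, hb, sq, mul_assoc]
      _ = -b := by rw [he, neg_one_mul]
  have : 2 * b = 0 := by linear_combination hneg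
  exact (mul_eq_zero.mp this).resolve_left h2

theorem eq_zero_of_map_sq_eq_neg_sq (h2 : (2 : R) ≠ 0) (hπ : Function.Involutive π)
    {i b : R} (hi : i ^ 2 = -1) (hπi : π i = i) (hb : π (b ^ 2) = -b ^ 2) : b = 0 := by
  have hsq : π b ^ 2 = (i * b) ^ 2 := by rw [← map_pow, hb, mul_pow, hi, neg_one_mul]
  rcases sq_eq_sq_iff_eq_or_eq_neg.mp hsq with h | h
  · exact eq_zero_of_map_eq_mul_of_sq_eq_neg_one h2 hπ hi hπi h
  · rw [← neg_mul] at h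
    exact eq_zero_of_map_eq_mul_of_sq_eq_neg_one h2 hπ (by rwa [neg_sq]) (by rw [map_neg, hπi]) h

end TwoNeZero

theorem IsQuadraticallySepClosed.map_ne_self_of_sq_eq_neg_one {K : Type*} [Field K]
    (hK : IsQuadraticallySepClosed K) {π : K →+* K} (hπ : Function.Involutive π) {a : K}
    (ha : π a ≠ a) {i : K} (hi : i ^ 2 = -1) : π i ≠ i := by
  intro hπi
  have h2 : (2 : K) ≠ 0 := hK.two_ne_zero_of_involutive hπ ha
  have hd : a - π a ≠ 0 := sub_ne_zero.mpr ha.symm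
  obtain ⟨b, hb⟩ := hK.exists_sq_eq h2 (a - π a)
  have hπb : π (b ^ 2) = -b ^ 2 := by rw [hb, map_sub, hπ a, neg_sub]
  have hb0 : b = 0 := eq_zero_of_map_sq_eq_neg_sq h2 hπ hi hπi hπb
  exact hd (by rw [← hb, hb0, zero_pow two_ne_zero])

theorem stmt0_general {K : Type*} [Field K] (hK : IsQuadraticallySepClosed K) (π : K →+* K)
    (hne : π ≠ RingHom.id K) (hπ : Function.Involutive π) (i : K) (hi : i ^ 2 = -1) :
    π i = -i ∧ -i ≠ i := by
  obtain ⟨a, ha⟩ : ∃ a, π a ≠ a := DFunLike.exists_ne hne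
  have hmoved : π i ≠ i := hK.map_ne_self_of_sq_eq_neg_one hπ ha hi
  have hsq : π i ^ 2 = i ^ 2 := by rw [← map_pow, hi, map_neg, map_one]
  have hmap : π i = -i := (sq_eq_sq_iff_eq_or_eq_neg.mp hsq).resolve_left hmoved
  exact ⟨hmap, hmap ▸ hmoved⟩

/-- Pincus's lemma: if `K` is an algebraically closed field, `π` is a ring
automorphism of `K` with `π ≠ id` and `π ∘ π = id`, and `i ∈ K` satisfies
`i² = -1`, then `π i = -i` and `-i ≠ i`. -/
theorem stmt0 {K : Type*} [Field K] [IsAlgClosed K]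
    (π : K ≃+* K) (hne : π ≠ RingEquiv.refl K)
    (hinv : ∀ x : K, π (π x) = x)
    (i : K) (hi : i ^ 2 = -1) :
    π i = -i ∧ -i ≠ i :=
  stmt0_general .of_isAlgClosed (π : K →+* K)
    (fun h => hne (RingEquiv.ext (RingHom.congr_fun h))) hinv i hi
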